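/- Let k ≥ 1 be an integer and define the polynomial S_k(z) = ∑_{j=0}^{k} C(2k,2j) E_{2j} E_{2k−2j} z^j (a polynomial of degree k with integer coefficients). Then every complex root of S_k lies on the unit circle (has absolute value 1), and all roots of S_k are simple. -/

import Mathlib

/-- Auxiliary: `eulerEvenAux m` is the Euler number `E_{2m}`, defined via the
recurrence `∑_{j=0}^{n} C(2n,2j) E_{2j} = 0` for `n ≥ 1`, with `E_0 = 1`. -/
def eulerEvenAux : ℕ → ℚ
  | 0 => 1
  | m + 1 => -∑ j ∈ (Finset.range (m + 1)).attach,
      ((Nat.choose (2 * (m + 1)) (2 * (j : ℕ))) : ℚ) * eulerEvenAux j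
decreasing_by exact Finset.mem_range.mp j.2

/-- The Euler numbers: `E_0 = 1`, `E_n = 0` for odd `n`, and
`∑_{j=0}^{n} C(2n,2j) E_{2j} = 0` for every `n ≥ 1`. -/
def eulerE (n : ℕ) : ℚ := if n % 2 = 1 then 0 else eulerEvenAux (n / 2)

/-- The polynomial `S_k(z) = ∑_{j=0}^{k} C(2k,2j) E_{2j} E_{2k−2j} z^j`,
viewed as a polynomial over `ℂ`. -/
noncomputable def Spoly (k : ℕ) : Polynomial ℂ :=
  ∑ j ∈ Finset.range (k + 1),
    Polynomial.C ((((Nat.choose (2 * k) (2 * j)) : ℚ) * eulerE (2 * j)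
      * eulerE (2 * k - 2 * j) : ℚ) : ℂ) * Polynomial.X ^ j


namespace EulerAux
open Polynomial
noncomputable def P (N : ℕ) (A : ℝ) (s : ℕ → ℝ) (q : ℕ → ℕ) : ℂ[X] :=
  C (A:ℂ) + ∑ j ∈ Finset.range N, C ((s j : ℝ) : ℂ) * X ^ (q j)
noncomputable def R (N n : ℕ) (A : ℝ) (s : ℕ → ℝ) (q : ℕ → ℕ) : ℂ[X] :=
  C (A:ℂ) * X ^ n + ∑ j ∈ Finset.range N, C ((s j : ℝ) : ℂ) * X ^ (n - q j)

variable {N n : ℕ} {A : ℝ} {s : ℕ → ℝ} {q : ℕ → ℕ}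

lemma P_eval (z : ℂ) : (P N A s q).eval z = A + ∑ j ∈ Finset.range N, (s j : ℂ) * z ^ (q j) := by
  simp [P, eval_finsetSum]
lemma R_eval (z : ℂ) : (R N n A s q).eval z = A * z ^ n + ∑ j ∈ Finset.range N, (s j : ℂ) * z ^ (n - q j) := by
  simp [R, eval_finsetSum]

lemma sum_bound (f : ℕ → ℂ) (c : ℝ) (hf : ∀ j ∈ Finset.range N, ‖f j‖ ≤ c) :
    ‖∑ j ∈ Finset.range N, (s j : ℂ) * f j‖ ≤ (∑ j ∈ Finset.range N, |s j|) * c := by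
  rw [Finset.sum_mul]
  refine norm_sum_le_of_le _ fun j hj => ?_
  rw [norm_mul, Complex.norm_real, Real.norm_eq_abs]
  exact mul_le_mul_of_nonneg_left (hf j hj) (abs_nonneg _)

lemma P_lower (hA : 0 < A) {z : ℂ} (hz : ‖z‖ ≤ 1) :
    A - ∑ j ∈ Finset.range N, |s j| ≤ ‖(P N A s q).eval z‖ := by
  rw [P_eval]
  have h := sum_bound (N := N) (s := s) (fun j => z ^ (q j)) 1
    (fun j _ => by rw [norm_pow]; exact pow_le_one₀ (norm_nonneg _) hz)
  have h2 := norm_sub_le ((A:ℂ) + ∑ j ∈ Finset.range N, (s j : ℂ) * z ^ (q j))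
    (∑ j ∈ Finset.range N, (s j : ℂ) * z ^ (q j))
  rw [add_sub_cancel_right, Complex.norm_real, Real.norm_eq_abs, abs_of_pos hA] at h2
  linarith

lemma R_eq (hq : ∀ j ∈ Finset.range N, 2 * q j ≤ n) {z : ℂ} (hz : z ≠ 0) :
    (R N n A s q).eval z = z ^ n * (P N A s q).eval z⁻¹ := by
  rw [R_eval, P_eval, mul_add, Finset.mul_sum]
  congr 1
  · ring
  · refine Finset.sum_congr rfl fun j hj => ?_
    have := hq j hj
    rw [pow_sub₀ _ hz (by omega), inv_pow]; ring

lemma P_conj (z : ℂ) : ‖(P N A s q).eval (starRingEnd ℂ z)‖ = ‖(P N A s q).eval z‖ := by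
  rw [← Complex.norm_conj ((P N A s q).eval z), P_eval, P_eval]
  simp

lemma no_big (hA : 2 * ∑ j ∈ Finset.range N, |s j| < A) (hn : 1 ≤ n)
    (hq : ∀ j ∈ Finset.range N, 2 * q j ≤ n) {z : ℂ} (hz : 1 < ‖z‖)
    (h : (P N A s q).eval z = (R N n A s q).eval z) : False := by
  have hD : 0 ≤ ∑ j ∈ Finset.range N, |s j| := Finset.sum_nonneg fun _ _ => abs_nonneg _
  have hz0 : z ≠ 0 := by rintro rfl; simp at hz; linarith
  set r := ‖z‖ with hr
  set w := starRingEnd ℂ z⁻¹ with hw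
  have hr0 : 0 < r := by linarith
  have hwn : ‖w‖ = r⁻¹ := by rw [hw, Complex.norm_conj, norm_inv]
  have hwz : w = z * ((r:ℂ)^2)⁻¹ := by
    rw [hw, map_inv₀]
    have hc : (starRingEnd ℂ) z ≠ 0 := by simpa using hz0
    have hrc : (r:ℂ)≠0 := by exact_mod_cast hr0.ne'
    have := Complex.mul_conj' z
    field_simp
    rw [hr, ← this]; ring
  have hlow := P_lower (N := N) (s := s) (q := q) (A := A) (by linarith) (z := w)
    (by rw [hwn]; exact inv_le_one_of_one_le₀ hz.le)
  have h1 : ‖(P N A s q).eval z‖ = r ^ n * ‖(P N A s q).eval w‖ := by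
    rw [h, R_eq hq hz0, norm_mul, norm_pow, hw, P_conj]
  have hrn : 1 < r ^ n := one_lt_pow₀ hz (by omega)
  have h2 : ‖(P N A s q).eval z - (P N A s q).eval w‖ ≤
      (∑ j ∈ Finset.range N, |s j|) * (r ^ n - 1) := by
    rw [P_eval, P_eval, add_sub_add_left_eq_sub, ← Finset.sum_sub_distrib]
    simp only [← mul_sub]
    apply sum_bound (N := N) (s := s) (fun j => z ^ q j - w ^ q j)
    intro j hj
    have e : z ^ q j - w ^ q j = z ^ q j * ((1 - (r^ (2 * q j))⁻¹ : ℝ) : ℂ) := by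
      rw [hwz]; push_cast; rw [mul_pow, inv_pow, ← pow_mul]; ring
    have hp : 1 ≤ r ^ (2 * q j) := one_le_pow₀ hz.le
    have hp1 : 1 ≤ r ^ (q j) := one_le_pow₀ hz.le
    have hpn : r ^ (2 * q j) ≤ r ^ n := pow_le_pow_right₀ hz.le (hq j hj)
    rw [e, norm_mul, norm_pow, Complex.norm_real, Real.norm_eq_abs,
      abs_of_nonneg (sub_nonneg.2 (inv_le_one_of_one_le₀ hp)), ← hr]
    have e2 : r ^ q j * (1 - (r^ (2 * q j))⁻¹) = (r ^ q j) - (r ^ q j)⁻¹ := by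
      have : r ^ q j ≠ 0 := by positivity
      rw [mul_comm 2, pow_mul]; field_simp
    rw [e2]
    rw [mul_comm 2, pow_mul] at hpn
    have : (r ^ q j) - (r ^ q j)⁻¹ ≤ (r ^ q j) ^ 2 - 1 := by
      have hpos : 0 < r ^ q j := by positivity
      rw [← sub_nonneg]
      have : (r ^ q j) ^ 2 - 1 - ((r ^ q j) - (r ^ q j)⁻¹)
        = ((r ^ q j)^2 - 1) * (r ^ q j - 1) * (r ^ q j)⁻¹ := by field_simp
      rw [this]
      have : 0 ≤ (r ^ q j)^2 - 1 := by nlinarith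
      have : 0 ≤ (r ^ q j) - 1 := by linarith
      positivity
    linarith
  have h3 := norm_sub_norm_le ((P N A s q).eval z) ((P N A s q).eval w)
  nlinarith

lemma on_circle (hA : 2 * ∑ j ∈ Finset.range N, |s j| < A) (hn : 1 ≤ n)
    (hq : ∀ j ∈ Finset.range N, 2 * q j ≤ n) {z : ℂ}
    (h : (P N A s q).eval z = (R N n A s q).eval z) : ‖z‖ = 1 := by
  have hD : 0 ≤ ∑ j ∈ Finset.range N, |s j| := Finset.sum_nonneg fun _ _ => abs_nonneg _
  rcases lt_trichotomy ‖z‖ 1 with h1 | h1 | h1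
  · exfalso
    by_cases hz : z = 0
    · subst hz
      have hl := P_lower (N := N) (s := s) (q := q) (A := A) (by linarith) (z := 0) (by simp)
      have h0 : ∑ j ∈ Finset.range N, (s j : ℂ) * 0 ^ (n - q j) = 0 := by
        refine Finset.sum_eq_zero fun j hj => ?_
        have := hq j hj
        rw [zero_pow (by omega), mul_zero]
      rw [h, R_eval, h0, zero_pow (by omega)] at hl
      simp at hl; linarith
    · refine no_big (z := z⁻¹) hA hn hq ?_ ?_
      · rw [norm_inv]; exact (one_lt_inv₀ (norm_pos_iff.2 hz)).2 h1
      · rw [R_eq hq (inv_ne_zero hz), inv_inv, h, R_eq hq hz, ← mul_assoc, ← mul_pow,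
          inv_mul_cancel₀ hz, one_pow, one_mul]
  · exact h1
  · exact (no_big hA hn hq h1 h).elim

lemma zP' (z : ℂ) : z * (derivative (P N A s q)).eval z =
    ∑ j ∈ Finset.range N, (s j : ℂ) * ((q j : ℂ) * z ^ (q j)) := by
  simp only [P, derivative_add, derivative_C, zero_add, derivative_sum, eval_finsetSum,
    Finset.mul_sum, derivative_C_mul, derivative_X_pow, eval_mul, eval_C, eval_pow, eval_X]
  refine Finset.sum_congr rfl fun j hj => ?_
  rcases Nat.eq_zero_or_pos (q j) with h | h
  · simp [h]
  · obtain ⟨m, hm⟩ := Nat.exists_eq_succ_of_ne_zero h.ne'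
    simp [hm]; ring

lemma zR' (hq : ∀ j ∈ Finset.range N, 2 * q j ≤ n) (z : ℂ) :
    z * (derivative (R N n A s q)).eval z = n * (R N n A s q).eval z -
    ∑ j ∈ Finset.range N, (s j : ℂ) * ((q j : ℂ) * z ^ (n - q j)) := by
  have key : ∀ m : ℕ, z * ((m:ℂ) * z ^ (m-1)) = m * z ^ m := by
    intro m
    rcases m with _ | m
    · simp
    · simp; ring
  rw [R_eval]
  simp only [R, derivative_add, derivative_sum, eval_finsetSum, eval_add,
    Finset.mul_sum, derivative_C_mul, derivative_X_pow, eval_mul, eval_C, eval_pow, eval_X, mul_add,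
    eval_natCast]
  rw [add_sub_assoc, ← Finset.sum_sub_distrib]
  congr 1
  · rw [mul_left_comm, key]; ring
  · refine Finset.sum_congr rfl fun j hj => ?_
    have := hq j hj
    rw [mul_left_comm, key, Nat.cast_sub (by omega)]; ring

lemma deriv_ne (hA : 2 * ∑ j ∈ Finset.range N, |s j| < A) (hn : 1 ≤ n)
    (hq : ∀ j ∈ Finset.range N, 2 * q j ≤ n) {z : ℂ}
    (h : (P N A s q).eval z = (R N n A s q).eval z) :
    (derivative (P N A s q)).eval z ≠ (derivative (R N n A s q)).eval z := by
  intro h'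
  have hz := on_circle hA hn hq h
  have hD : 0 ≤ ∑ j ∈ Finset.range N, |s j| := Finset.sum_nonneg fun _ _ => abs_nonneg _
  have e : (n:ℂ) * (P N A s q).eval z =
      ∑ j ∈ Finset.range N, (s j : ℂ) * ((q j : ℂ) * z ^ (q j) + (q j : ℂ) * z ^ (n - q j)) := by
    simp only [mul_add (Complex.ofReal _), Finset.sum_add_distrib]
    rw [← zP' (A := A), h', zR' hq, h]; ring
  have hb := sum_bound (N := N) (s := s)
    (fun j => (q j : ℂ) * z ^ (q j) + (q j : ℂ) * z ^ (n - q j)) n (by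
      intro j hj
      refine (norm_add_le _ _).trans ?_
      simp only [norm_mul, norm_pow, hz, one_pow, mul_one, Complex.norm_natCast]
      have := hq j hj
      rw [← two_mul]; exact_mod_cast this)
  rw [← e, norm_mul, Complex.norm_natCast] at hb
  have hl := P_lower (N := N) (s := s) (q := q) (A := A) (by linarith) hz.le
  have : (1:ℝ) ≤ n := by exact_mod_cast hn
  nlinarith
end EulerAux

namespace EulerAux
open Polynomial

lemma bern_add (n : ℕ) (x y : ℚ) : (Polynomial.bernoulli n).eval (x + y) =
    ∑ k ∈ Finset.range (n + 1), (n.choose k : ℚ) * (Polynomial.bernoulli k).eval x * y ^ (n - k) := by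
  have h1 := bernoulli_generating_function (A := ℚ) (x + y)
  have h2 := bernoulli_generating_function (A := ℚ) x
  have hne : (PowerSeries.exp ℚ - 1) ≠ 0 := by
    intro h
    have := congrArg (PowerSeries.coeff 1) h
    simp [PowerSeries.coeff_exp, PowerSeries.coeff_one] at this
  rw [← PowerSeries.exp_mul_exp_eq_exp_add, ← mul_assoc, ← h2, mul_right_comm] at h1
  have h3 := congrArg (PowerSeries.coeff n) (mul_right_cancel₀ hne h1)
  rw [PowerSeries.coeff_mul, Finset.Nat.sum_antidiagonal_eq_sum_range_succ_mk] at h3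
  simp only [PowerSeries.coeff_mk, PowerSeries.coeff_rescale, PowerSeries.coeff_exp] at h3
  simp only [Polynomial.coe_aeval_eq_eval, eval_smul, smul_eq_mul] at h3
  have hf : (n.factorial : ℚ) ≠ 0 := by exact_mod_cast n.factorial_ne_zero
  have h4 : (Polynomial.bernoulli n).eval (x + y) = n.factorial *
      (1 / n.factorial * (Polynomial.bernoulli n).eval (x + y)) := by field_simp
  rw [h4, h3, Finset.mul_sum]
  refine Finset.sum_congr rfl fun k hk => ?_
  have hk' : k ≤ n := by simpa [Nat.lt_succ_iff] using hk
  have hc : (n.choose k : ℚ) = n.factorial / (k.factorial * (n-k).factorial) := by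
    rw [Nat.cast_choose ℚ hk']
  rw [hc]
  simp
  field_simp

lemma sum_pairs {M : Type*} [AddCommMonoid M] (f : ℕ → M) (m : ℕ) :
    ∑ i ∈ Finset.range (2 * m), f i = ∑ i ∈ Finset.range m, (f (2 * i) + f (2 * i + 1)) := by
  induction m with
  | zero => simp
  | succ m ih => rw [show 2 * (m + 1) = 2 * m + 1 + 1 by ring, Finset.sum_range_succ,
      Finset.sum_range_succ, Finset.sum_range_succ, ih, add_assoc]

noncomputable def g (j : ℕ) : ℚ :=
  -(4 ^ (2 * j + 1) * (Polynomial.bernoulli (2 * j + 1)).eval (1 / 4) / (2 * j + 1))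

lemma g_zero : g 0 = 1 := by
  simp [g, Polynomial.bernoulli_one]; norm_num

lemma g_rec (N : ℕ) (hN : 1 ≤ N) :
    ∑ j ∈ Finset.range (N + 1), ((2 * N).choose (2 * j) : ℚ) * g j = 0 := by
  have h0 : (Polynomial.bernoulli (2 * N + 1)).eval ((1:ℚ) / 4 + -(1 / 4)) = 0 := by
    rw [add_neg_cancel, Polynomial.bernoulli_eval_zero]
    exact bernoulli_eq_zero_of_odd ⟨N, rfl⟩ (by omega)
  have h1 : (Polynomial.bernoulli (2 * N + 1)).eval ((1:ℚ) / 4 + (1 / 4)) = 0 := by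
    have := Polynomial.bernoulli_eval_one_sub (2 * N + 1) (1 / 2)
    rw [Odd.neg_one_pow ⟨N, rfl⟩] at this
    norm_num at this ⊢
    linarith
  rw [bern_add] at h0 h1
  have h2 := congrArg₂ (· + ·) h0 h1
  simp only [add_zero] at h2
  rw [← Finset.sum_add_distrib, show 2 * N + 1 + 1 = 2 * (N + 1) by ring, sum_pairs] at h2
  have h3 : ∀ j ∈ Finset.range (N + 1), ((2 * N).choose (2 * j) : ℚ) * g j =
     (-(4:ℚ) ^ (2 * N + 1) / (2 * (2 * N + 1))) * ((((2 * N + 1).choose (2 * j) : ℚ) * (Polynomial.bernoulli (2 * j)).eval (1 / 4) * (-(1 / 4)) ^ (2 * N + 1 - 2 * j) + ((2 * N + 1).choose (2 * j) : ℚ) * (Polynomial.bernoulli (2 * j)).eval (1 / 4) * ((1 / 4)) ^ (2 * N + 1 - 2 * j)) +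
     (((2 * N + 1).choose (2 * j + 1) : ℚ) * (Polynomial.bernoulli (2 * j + 1)).eval (1 / 4) * (-(1 / 4)) ^ (2 * N + 1 - (2 * j + 1)) + ((2 * N + 1).choose (2 * j + 1) : ℚ) * (Polynomial.bernoulli (2 * j + 1)).eval (1 / 4) * ((1 / 4)) ^ (2 * N + 1 - (2 * j + 1)))) := by
    intro j hj
    have hj' : j ≤ N := by simpa [Nat.lt_succ_iff] using hj
    obtain ⟨m, rfl⟩ := Nat.exists_eq_add_of_le hj'
    have e1 : 2 * (j + m) + 1 - 2 * j = 2 * m + 1 := by omega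
    have e2 : 2 * (j + m) + 1 - (2 * j + 1) = 2 * m := by omega
    rw [e1, e2, Odd.neg_pow ⟨m, rfl⟩, Even.neg_pow ⟨m, by ring⟩]
    have hc := Nat.add_one_mul_choose_eq (2 * (j + m)) (2 * j)
    have hc' : (2 * ((j:ℚ) + m) + 1) * ((2 * (j + m)).choose (2 * j) : ℚ) =
      ((2 * (j + m) + 1).choose (2 * j + 1) : ℚ) * (2 * j + 1) := by exact_mod_cast hc
    have hp : (2 * ((j:ℚ) + m) + 1) ≠ 0 := by positivity
    have hp2 : (2 * (j:ℚ) + 1) ≠ 0 := by positivity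
    have hc'' : ((2 * (j + m)).choose (2 * j) : ℚ) =
      ((2 * (j + m) + 1).choose (2 * j + 1) : ℚ) * (2 * j + 1) / (2 * ((j:ℚ) + m) + 1) := by
      field_simp; linarith
    rw [hc'', g]
    have e3 : (4:ℚ) ^ (2 * (j + m) + 1) = 4 ^ (2 * j + 1) * 4 ^ (2 * m) := by
      rw [← pow_add]; congr 1; ring
    push_cast
    simp only [e3, one_div_pow]
    field_simp
    ring
  rw [Finset.sum_congr rfl h3, ← Finset.mul_sum, h2, mul_zero]

lemma aux_eq_g (j : ℕ) : eulerEvenAux j = g j := by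
  induction j using Nat.strong_induction_on with
  | _ j ih =>
    rcases j with _ | m
    · rw [g_zero, eulerEvenAux]
    · rw [eulerEvenAux, Finset.sum_attach (Finset.range (m + 1))
        (fun j => ((Nat.choose (2 * (m + 1)) (2 * j)) : ℚ) * eulerEvenAux j)]
      have h := g_rec (m + 1) (by omega)
      rw [Finset.sum_range_succ, Nat.choose_self] at h
      rw [Finset.sum_congr rfl fun j hj => by rw [ih j (by simpa using hj)]]
      push_cast at h
      linarith

noncomputable def u (j : ℕ) : ℝ :=
  (-1) ^ j * (eulerEvenAux j : ℝ) / (2 * j).factorial * (Real.pi / 2) ^ (2 * j)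

lemma u_zero : u 0 = 1 := by simp [u, eulerEvenAux]

lemma u_hasSum (j : ℕ) (hj : j ≠ 0) :
    HasSum (fun n : ℕ => 1 / (n : ℝ) ^ (2 * j + 1) * Real.sin (2 * Real.pi * n * (1 / 4)))
      (u j * (Real.pi / 4)) := by
  convert! hasSum_one_div_nat_pow_mul_sin hj (x := 1 / 4) (by constructor <;> norm_num) using 1
  have : (1 / 4 : ℝ) = (algebraMap ℚ ℝ) (1 / 4 : ℚ) := by simp
  rw [this, Polynomial.eval_map, Polynomial.eval₂_at_apply, u, aux_eq_g, g, Nat.factorial_succ]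
  have e4 : (4:ℝ) ^ (2 * j + 1) = 2 ^ (2 * j + 1) * 2 ^ (2 * j + 1) := by
    rw [← mul_pow]; norm_num
  simp only [eq_ratCast]
  push_cast
  rw [e4, mul_pow, div_pow]
  field_simp
  ring

lemma u_tendsto (j : ℕ) (hj : j ≠ 0) :
    Filter.Tendsto (fun m : ℕ => ∑ i ∈ Finset.range m, (-1 : ℝ) ^ i * (1 / (2 * (i:ℝ) + 1) ^ (2 * j + 1)))
      Filter.atTop (nhds (u j * (Real.pi / 4))) := by
  have h := (u_hasSum j hj).tendsto_sum_nat
  have h2 := h.comp (Filter.tendsto_id.const_mul_atTop' (show 0 < 2 by norm_num))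
  refine h2.congr fun m => ?_
  simp only [Function.comp, id]
  rw [sum_pairs]
  refine Finset.sum_congr rfl fun i _ => ?_
  have e1 : Real.sin (2 * Real.pi * ((2 * i : ℕ) : ℝ) * (1 / 4)) = 0 := by
    rw [← Real.sin_nat_mul_pi i]; congr 1; push_cast; ring
  have e2 : Real.sin (2 * Real.pi * ((2 * i + 1 : ℕ) : ℝ) * (1 / 4)) = (-1) ^ i := by
    rw [← Real.cos_nat_mul_pi i, ← Real.sin_add_pi_div_two]; congr 1; push_cast; ring
  rw [e1, e2]; push_cast; ring

lemma anti (j : ℕ) : Antitone (fun i : ℕ => 1 / (2 * (i:ℝ) + 1) ^ (2 * j + 1)) := by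
  intro a b hab
  have : (a:ℝ) ≤ b := by exact_mod_cast hab
  dsimp only
  gcongr

lemma u_le_one (j : ℕ) (hj : j ≠ 0) : u j * (Real.pi / 4) ≤ 1 := by
  have := (anti j).tendsto_le_alternating_series (u_tendsto j hj) 0
  simpa using this

lemma u_upper (j : ℕ) (hj : j ≠ 0) :
    u j * (Real.pi / 4) ≤ 1 - (1 / 3) ^ (2 * j + 1) + (1 / 5) ^ (2 * j + 1) := by
  have := (anti j).tendsto_le_alternating_series (u_tendsto j hj) 1
  simp only [one_div_pow]
  norm_num [Finset.sum_range_succ] at this ⊢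
  linarith

lemma u_lower (j : ℕ) (hj : j ≠ 0) :
    1 - (1 / 3) ^ (2 * j + 1) ≤ u j * (Real.pi / 4) := by
  have := (anti j).alternating_series_le_tendsto (u_tendsto j hj) 1
  simp only [one_div_pow]
  norm_num [Finset.sum_range_succ] at this ⊢
  linarith

lemma u_mono : Monotone u := by
  refine monotone_nat_of_le_succ fun j => ?_
  have hpi := Real.pi_pos
  have hpi2 := Real.pi_lt_d2
  have hl := u_lower (j + 1) (by omega)
  refine le_of_mul_le_mul_right ?_ (show 0 < Real.pi / 4 by positivity)
  refine le_trans ?_ hl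
  rcases Nat.eq_zero_or_pos j with rfl | hj
  · rw [u_zero]; norm_num; linarith
  · refine (u_upper j (by omega)).trans ?_
    have e : ((1:ℝ) / 3) ^ (2 * (j + 1) + 1) = (1 / 3) ^ (2 * j + 1) * (1 / 9) := by
      rw [show 2 * (j + 1) + 1 = (2 * j + 1) + 2 by ring, pow_add]; norm_num
    have e2 : ((1:ℝ) / 5) ^ (2 * j + 1) ≤ (1 / 3) ^ (2 * j + 1) * (3 / 5) := by
      rw [show (1:ℝ) / 5 = (1 / 3) * (3 / 5) by norm_num, mul_pow]
      gcongr
      exact pow_le_of_le_one (by norm_num) (by norm_num) (by omega)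
    have : (0:ℝ) < (1 / 3) ^ (2 * j + 1) := by positivity
    rw [e]; linarith

lemma u_le (j : ℕ) : u j ≤ 1.28 := by
  rcases Nat.eq_zero_or_pos j with rfl | hj
  · rw [u_zero]; norm_num
  · have h := u_le_one j (by omega)
    have hpi := Real.pi_gt_d2
    by_contra! hc
    nlinarith

lemma one_le_u (j : ℕ) : 1 ≤ u j := by
  rw [← u_zero]; exact u_mono (Nat.zero_le _)

lemma aux_eq (j : ℕ) : (eulerEvenAux j : ℝ) =
    (-1) ^ j * (2 * j).factorial * (2 / Real.pi) ^ (2 * j) * u j := by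
  have hpi := Real.pi_pos
  have h1 : ((-1:ℝ) ^ j) * (-1) ^ j = 1 := by rw [← mul_pow]; norm_num
  have h2 : (2 / Real.pi) ^ (2 * j) * (Real.pi / 2) ^ (2 * j) = 1 := by
    rw [← mul_pow]; field_simp; simp
  have hf : ((2 * j).factorial : ℝ) ≠ 0 := by exact_mod_cast Nat.factorial_ne_zero _
  rw [u]
  calc (eulerEvenAux j : ℝ) = (((-1:ℝ) ^ j) * (-1) ^ j) * ((2 / Real.pi) ^ (2 * j) * (Real.pi / 2) ^ (2 * j)) * eulerEvenAux j := by rw [h1, h2]; ring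
    _ = _ := by field_simp

lemma eulerE_even (j : ℕ) : eulerE (2 * j) = eulerEvenAux j := by
  rw [eulerE, if_neg (by omega)]; congr 1; omega

noncomputable def T (k : ℕ) (a : ℕ → ℝ) : ℂ[X] :=
  ∑ j ∈ Finset.range (k + 1), C ((a j : ℝ) : ℂ) * X ^ j

noncomputable def cst (k : ℕ) : ℝ := (-1) ^ k * (2 * k).factorial * (2 / Real.pi) ^ (2 * k)

lemma cst_ne (k : ℕ) : cst k ≠ 0 := by
  have hpi := Real.pi_pos
  have hf : ((2 * k).factorial : ℝ) ≠ 0 := by exact_mod_cast Nat.factorial_ne_zero _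
  unfold cst; positivity

lemma Spoly_eq (k : ℕ) : Spoly k = C ((cst k : ℝ) : ℂ) * T k (fun j => u j * u (k - j)) := by
  rw [Spoly, T, Finset.mul_sum]
  refine Finset.sum_congr rfl fun j hj => ?_
  have hj' : j ≤ k := by simpa [Nat.lt_succ_iff] using hj
  rw [← mul_assoc, ← C_mul, ← Complex.ofReal_mul, ← Complex.ofReal_ratCast]
  congr 3
  obtain ⟨m, rfl⟩ := Nat.exists_eq_add_of_le hj'
  rw [← Nat.mul_sub, eulerE_even, eulerE_even, Nat.add_sub_cancel_left]
  push_cast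
  rw [aux_eq, aux_eq, cst, Nat.cast_choose ℝ (show 2 * j ≤ 2 * (j + m) by omega),
    show 2 * (j + m) - 2 * j = 2 * m by omega, mul_add, pow_add, pow_add]
  have hf : ((2 * j).factorial : ℝ) ≠ 0 := by exact_mod_cast Nat.factorial_ne_zero _
  have hf2 : ((2 * m).factorial : ℝ) ≠ 0 := by exact_mod_cast Nat.factorial_ne_zero _
  field_simp
end EulerAux

namespace EulerAux
open Polynomial

lemma T_mul (k : ℕ) (a : ℕ → ℝ) : (1 - X) * T k a =
    C ((a 0 : ℝ) : ℂ) - C ((a k : ℝ) : ℂ) * X ^ (k + 1) +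
      ∑ j ∈ Finset.range k, C ((a (j + 1) - a j : ℝ) : ℂ) * X ^ (j + 1) := by
  induction k with
  | zero => simp [T]; ring
  | succ k ih =>
    have : T (k + 1) a = T k a + C ((a (k + 1) : ℝ) : ℂ) * X ^ (k + 1) := by
      rw [T, Finset.sum_range_succ, T]
    rw [this, mul_add, ih, Finset.sum_range_succ]
    simp only [Complex.ofReal_sub, C_sub]
    ring

lemma key_id (k : ℕ) (a : ℕ → ℝ) (ha : ∀ j ≤ k, a (k - j) = a j) :
    2 * ((1 - X) * T k a) =
      P k (2 * a 0) (fun j => if 2 * (j + 1) ≤ k + 1 then a (j + 1) - a j else -(a (j + 1) - a j))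
        (fun j => if 2 * (j + 1) ≤ k + 1 then j + 1 else k - j) -
      R k (k + 1) (2 * a 0)
        (fun j => if 2 * (j + 1) ≤ k + 1 then a (j + 1) - a j else -(a (j + 1) - a j))
        (fun j => if 2 * (j + 1) ≤ k + 1 then j + 1 else k - j) := by
  have hk : a k = a 0 := by simpa using ha 0 (Nat.zero_le _)
  have hrefl : ∑ j ∈ Finset.range k, C ((a (j + 1) - a j : ℝ) : ℂ) * X ^ (j + 1) =
      - ∑ j ∈ Finset.range k, C ((a (j + 1) - a j : ℝ) : ℂ) * X ^ (k - j) := by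
    rw [← Finset.sum_range_reflect, ← Finset.sum_neg_distrib]
    refine Finset.sum_congr rfl fun j hj => ?_
    have hj : j < k := by simpa using hj
    rw [show k - 1 - j + 1 = k - j by omega, ha j hj.le, show k - 1 - j = k - (j + 1) by omega,
      ha (j + 1) hj, ← neg_mul, ← C_neg, ← Complex.ofReal_neg, neg_sub]
  have hs : (∑ j ∈ Finset.range k, C ((a (j + 1) - a j : ℝ) : ℂ) * X ^ (j + 1)) +
      (∑ j ∈ Finset.range k, C ((a (j + 1) - a j : ℝ) : ℂ) * X ^ (j + 1)) =
     ∑ j ∈ Finset.range k, C ((a (j + 1) - a j : ℝ) : ℂ) * (X ^ (j + 1) - X ^ (k - j)) := by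
    nth_rewrite 2 [hrefl]
    rw [← sub_eq_add_neg, ← Finset.sum_sub_distrib]
    simp only [mul_sub]
  rw [T_mul, P, R, hk, two_mul, add_add_add_comm, hs, add_sub_add_comm, ← Finset.sum_sub_distrib]
  congr 1
  · push_cast; simp only [C_mul]; rw [show C (2:ℂ) = 2 from rfl]; ring
  · refine Finset.sum_congr rfl fun j hj => ?_
    have hj : j < k := by simpa using hj
    split_ifs with h
    · rw [show k + 1 - (j + 1) = k - j by omega]; ring
    · rw [show k + 1 - (k - j) = j + 1 by omega, Complex.ofReal_neg, C_neg]; ring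

lemma var_bound (k : ℕ) :
    ∑ j ∈ Finset.range k, |u (j + 1) * u (k - (j + 1)) - u j * u (k - j)| < 1 := by
  have h1 : ∀ j ∈ Finset.range k, |u (j + 1) * u (k - (j + 1)) - u j * u (k - j)| ≤
      1.28 * ((u (j + 1) - u j) + (u (k - j) - u (k - (j + 1)))) := by
    intro j hj
    have m1 : u j ≤ u (j + 1) := u_mono (by omega)
    have m2 : u (k - (j + 1)) ≤ u (k - j) := u_mono (by omega)
    have b1 := u_le (j + 1)
    have b2 := u_le (k - j)
    have l1 := one_le_u j
    have l2 := one_le_u (k - (j + 1))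
    rw [abs_le]; constructor <;> nlinarith
  have h2 : ∑ j ∈ Finset.range k, (u (k - j) - u (k - (j + 1))) = u k - u 0 := by
    have := Finset.sum_range_sub' (fun j => u (k - j)) k
    simpa using this
  refine (Finset.sum_le_sum h1).trans_lt ?_
  rw [← Finset.mul_sum, Finset.sum_add_distrib, h2, Finset.sum_range_sub, u_zero]
  have := u_le k
  norm_num at this ⊢
  linarith

end EulerAux

/-- Every complex root of `S_k` lies on the unit circle, and all roots are simple. -/
theorem Spoly_roots_on_unit_circle_and_simple (k : ℕ) (hk : 1 ≤ k) :
    ∀ z : ℂ, (Spoly k).IsRoot z →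
      ‖z‖ = 1 ∧ Polynomial.rootMultiplicity z (Spoly k) = 1 := by
  intro z hz
  have hc : ((EulerAux.cst k : ℝ) : ℂ) ≠ 0 := by exact_mod_cast EulerAux.cst_ne k
  have hS := EulerAux.Spoly_eq k
  set a : ℕ → ℝ := fun j => EulerAux.u j * EulerAux.u (k - j) with ha
  have hsym : ∀ j ≤ k, a (k - j) = a j := by
    intro j hj
    simp only [ha]
    rw [Nat.sub_sub_self hj, mul_comm]
  have hid := EulerAux.key_id k a hsym
  set s : ℕ → ℝ := fun j => if 2 * (j + 1) ≤ k + 1 then a (j + 1) - a j else -(a (j + 1) - a j)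
    with hs
  set q : ℕ → ℕ := fun j => if 2 * (j + 1) ≤ k + 1 then j + 1 else k - j with hq
  have hq2 : ∀ j ∈ Finset.range k, 2 * q j ≤ k + 1 := by
    intro j _
    simp only [hq]
    split_ifs <;> omega
  have hA : 2 * ∑ j ∈ Finset.range k, |s j| < 2 * a 0 := by
    have h1 : ∀ j ∈ Finset.range k, |s j| = |a (j + 1) - a j| := by
      intro j _
      simp only [hs]
      split_ifs
      · rfl
      · rw [abs_neg]
    have h2 := EulerAux.var_bound k
    have h3 : 1 ≤ a 0 := by
      simp only [ha]
      rw [EulerAux.u_zero, one_mul]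
      exact EulerAux.one_le_u _
    rw [Finset.sum_congr rfl h1]
    simp only [ha] at h3 ⊢
    linarith
  have hT : (EulerAux.T k a).eval z = 0 := by
    have h := hz
    rw [hS, Polynomial.IsRoot, Polynomial.eval_mul, Polynomial.eval_C] at h
    exact (mul_eq_zero.1 h).resolve_left hc
  have hPR : (EulerAux.P k (2 * a 0) s q).eval z = (EulerAux.R k (k + 1) (2 * a 0) s q).eval z := by
    have h := congrArg (Polynomial.eval z) hid
    rw [Polynomial.eval_mul, Polynomial.eval_mul, hT, mul_zero, mul_zero,
      Polynomial.eval_sub] at h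
    exact (sub_eq_zero.1 h.symm)
  have hne : Spoly k ≠ 0 := by
    intro h0
    have hz0 : (Spoly k).IsRoot 0 := by rw [h0]; simp [Polynomial.IsRoot]
    rw [hS, Polynomial.IsRoot, Polynomial.eval_mul, Polynomial.eval_C] at hz0
    have hT0 := (mul_eq_zero.1 hz0).resolve_left hc
    have h := congrArg (Polynomial.eval 0) hid
    rw [Polynomial.eval_mul, Polynomial.eval_mul, hT0, mul_zero, mul_zero,
      Polynomial.eval_sub] at h
    have := EulerAux.on_circle hA (by omega) hq2 (sub_eq_zero.1 h.symm)
    simp at this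
  refine ⟨EulerAux.on_circle hA (by omega) hq2 hPR, ?_⟩
  refine le_antisymm ?_ ((Polynomial.rootMultiplicity_pos hne).2 hz)
  by_contra! hlt
  have hd := ((Polynomial.one_lt_rootMultiplicity_iff_isRoot hne).1 hlt).2
  refine EulerAux.deriv_ne hA (by omega) hq2 hPR ?_
  rw [hS, Polynomial.IsRoot, Polynomial.derivative_C_mul, Polynomial.eval_mul,
    Polynomial.eval_C] at hd
  have hT' := (mul_eq_zero.1 hd).resolve_left hc
  have h := congrArg (fun p => Polynomial.eval z (Polynomial.derivative p)) hid
  simp only [Polynomial.derivative_mul, Polynomial.derivative_sub, Polynomial.eval_sub,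
    Polynomial.eval_add, Polynomial.eval_mul, hT, hT', mul_zero, add_zero] at h
  exact sub_eq_zero.1 h.symm
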